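/- The emptiness problem for register set automata with register equality test is undecidable: there is no computable function that, given (an encoding of) an RsA with register equality test A, decides whether L(A) = ∅. -/

import Mathlib

/-- A data word over the alphabet `Fin k`, with data domain `𝔻 = ℕ`. -/
abbrev DataWord (k : ℕ) : Type :=
  List (Fin k × ℕ)

/-- A transition of a (concretely encoded) register set automaton with register
equality test: `(src, letter, gIn, gNin, gEq, upd, tgt)`.  Guards `gIn`, `gNin` are
lists of registers; `gEq` is a list indexed by register number whose `r`-th entry
lists the registers whose content must equal that of register `r`; the update is
a list indexed by register number, `none` standing for the current input `in` and
`some r` for register `r`. -/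
structure CEqTrans (k : ℕ) where
  src : ℕ
  letter : Fin k
  gIn : List ℕ
  gNin : List ℕ
  gEq : List (List ℕ)
  upd : List (List (Option ℕ))
  tgt : ℕ

instance (k : ℕ) : Primcodable (CEqTrans k) :=
  Primcodable.ofEquiv
    (ℕ × Fin k × List ℕ × List ℕ × List (List ℕ) × List (List (Option ℕ)) × ℕ)
    { toFun := fun t => (t.src, t.letter, t.gIn, t.gNin, t.gEq, t.upd, t.tgt)
      invFun := fun p =>
        ⟨p.1, p.2.1, p.2.2.1, p.2.2.2.1, p.2.2.2.2.1, p.2.2.2.2.2.1, p.2.2.2.2.2.2⟩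
      left_inv := fun _ => rfl
      right_inv := fun _ => rfl }

/-- A (concretely encoded) register set automaton with register equality test, whose
states are `0, …, nQ - 1` and registers are `0, …, nR - 1` (initial segments of `ℕ`). -/
structure CRsAEq (k : ℕ) where
  nQ : ℕ
  nR : ℕ
  trans : List (CEqTrans k)
  I : List ℕ
  F : List ℕ

instance (k : ℕ) : Primcodable (CRsAEq k) :=
  Primcodable.ofEquiv (ℕ × ℕ × List (CEqTrans k) × List ℕ × List ℕ)
    { toFun := fun A => (A.nQ, A.nR, A.trans, A.I, A.F)
      invFun := fun p => ⟨p.1, p.2.1, p.2.2.1, p.2.2.2.1, p.2.2.2.2⟩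
      left_inv := fun _ => rfl
      right_inv := fun _ => rfl }

/-- The register assignment obtained after taking transition `t` with current input
data value `d`, starting from the assignment `f`. -/
def CEqTrans.apply {k : ℕ} (t : CEqTrans k) (f : ℕ → Finset ℕ) (d : ℕ) :
    ℕ → Finset ℕ := fun r =>
  ((t.upd.getD r []).map fun o =>
    match o with
    | none => ({d} : Finset ℕ)
    | some r' => f r').foldr (· ∪ ·) ∅

/-- One step of a `CRsAEq` from configuration `c` to configuration `c'`, reading the
letter `x`: besides the membership guards, every register listed in `gEq(r)` must
hold exactly the same set as register `r`. -/
def CRsAEq.Step {k : ℕ} (A : CRsAEq k) (c : ℕ × (ℕ → Finset ℕ)) (x : Fin k × ℕ)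
    (c' : ℕ × (ℕ → Finset ℕ)) : Prop :=
  ∃ t ∈ A.trans, t.src = c.1 ∧ t.letter = x.1 ∧
    (∀ r ∈ t.gIn, x.2 ∈ c.2 r) ∧ (∀ r ∈ t.gNin, x.2 ∉ c.2 r) ∧
    (∀ r : ℕ, ∀ r' ∈ t.gEq.getD r [], c.2 r' = c.2 r) ∧
    c' = (t.tgt, t.apply c.2 x.2)

/-- Runs of a `CRsAEq`. -/
inductive CRsAEq.Run {k : ℕ} (A : CRsAEq k) :
    (ℕ × (ℕ → Finset ℕ)) → DataWord k → (ℕ × (ℕ → Finset ℕ)) → Prop where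
  | nil (c : ℕ × (ℕ → Finset ℕ)) : CRsAEq.Run A c [] c
  | cons {c c' c'' : ℕ × (ℕ → Finset ℕ)} {x : Fin k × ℕ} {w : DataWord k} :
      A.Step c x c' → CRsAEq.Run A c' w c'' → CRsAEq.Run A c (x :: w) c''

/-- The language of a `CRsAEq`. -/
def CRsAEq.Lang {k : ℕ} (A : CRsAEq k) : Set (DataWord k) :=
  { w | ∃ q₀ ∈ A.I, ∃ c : ℕ × (ℕ → Finset ℕ),
      A.Run (q₀, fun _ => ∅) w c ∧ c.1 ∈ A.F }

/-- Well-formedness of a `CRsAEq`: all states and registers mentioned lie in the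
respective initial segments, the membership guards of each transition are disjoint,
and the equality guard and the update are functions on the registers. -/
def CRsAEq.WellFormed {k : ℕ} (A : CRsAEq k) : Prop :=
  (∀ q ∈ A.I, q < A.nQ) ∧ (∀ q ∈ A.F, q < A.nQ) ∧
  ∀ t ∈ A.trans, t.src < A.nQ ∧ t.tgt < A.nQ ∧
    (∀ r ∈ t.gIn, r < A.nR) ∧ (∀ r ∈ t.gNin, r < A.nR) ∧
    (∀ r ∈ t.gIn, r ∉ t.gNin) ∧
    t.gEq.length = A.nR ∧ (∀ l ∈ t.gEq, ∀ r' ∈ l, r' < A.nR) ∧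
    t.upd.length = A.nR ∧
    ∀ l ∈ t.upd, ∀ r' : ℕ, some r' ∈ l → r' < A.nR

/-!
A nonnegative counter is represented by the cardinality of a register. Inserting an input that is
not yet in the register increments the counter, and a register that stays empty allows zero tests by
an equality test. To decrement, the automaton guesses an arbitrary set in a scratch register, copies
it together with one new element to another scratch register, and tests whether the result is equal
to the register of the counter; the guessed set then has exactly one element less. Counter programs
with these operations compute all primitive recursive functions, among them the step-bounded
evaluation of partial recursive functions, and a counter may guess the number of steps. Given the
code `e` of a partial recursive function, an automaton first sets a counter to `e` by a chain of
insertions and then searches for a halting computation of `e`, so its language is nonempty if and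
only if `e` halts.
-/

open Relation

/-! ### Simulations and flowcharts -/

section Simulation

variable {X Y : Type*} {R : X → Y → Prop} {P P' : X → X → Prop} {ρ ρ' : Y → Y → Prop}

/-- The relation `R` is a simulation of the transition relation `P` by the transition relation
`ρ`. A bisimulation is expressed by adding `IsSimulation (flip R) ρ P`. -/
def IsSimulation (R : X → Y → Prop) (P : X → X → Prop) (ρ : Y → Y → Prop) : Prop :=
  ∀ ⦃x y x'⦄, R x y → P x x' → ∃ y', R x' y' ∧ ρ y y'

theorem IsSimulation.comp (h : IsSimulation R P ρ) (h' : IsSimulation R P' ρ') :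
    IsSimulation R (Comp P P') (Comp ρ ρ') := by
  rintro x y x'' hxy ⟨x', hP, hP'⟩
  obtain ⟨y', hxy', hρ⟩ := h hxy hP
  obtain ⟨y'', hxy'', hρ'⟩ := h' hxy' hP'
  exact ⟨y'', hxy'', y', hρ, hρ'⟩

theorem IsSimulation.reflTransGen (h : IsSimulation R P ρ) :
    IsSimulation R (ReflTransGen P) (ReflTransGen ρ) := by
  intro x y x'' hxy hP
  induction hP with
  | refl => exact ⟨y, hxy, .refl⟩
  | tail _ hstep ih =>
    obtain ⟨y', hxy', hρ⟩ := ih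
    obtain ⟨y'', hxy'', hρ'⟩ := h hxy' hstep
    exact ⟨y'', hxy'', hρ.tail hρ'⟩

end Simulation

/-- A nondeterministic flowchart with nodes `Q`: a control graph with finitely many edges, which
are labelled by actions in `α`. -/
structure Flowchart (α Q : Type*) where
  edges : List (Q × α × Q)
  start : Q
  final : Q

namespace Flowchart

variable {α Q Q' X : Type*}

/-- One step of a flowchart acting on a state space `X` through the semantics `step` of its
actions. -/
def Step (G : Flowchart α Q) (step : α → X → X → Prop) (u v : Q × X) : Prop :=
  ∃ a, (u.1, a, v.1) ∈ G.edges ∧ step a u.2 v.2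

/-- The input-output relation of a flowchart. -/
def Rel (G : Flowchart α Q) (step : α → X → X → Prop) (x y : X) : Prop :=
  ReflTransGen (G.Step step) (G.start, x) (G.final, y)

/-- The flowchart executing a single action. -/
def single (a : α) : Flowchart α Bool where
  edges := [(false, a, true)]
  start := false
  final := true

/-- Sequential composition of flowcharts, joined by an edge with action `skip`. -/
def seq (skip : α) (G : Flowchart α Q) (H : Flowchart α Q') : Flowchart α (Q ⊕ Q') where
  edges := (.inl G.final, skip, .inr H.start) ::
    (G.edges.map (Prod.map .inl (Prod.map id .inl)) ++
      H.edges.map (Prod.map .inr (Prod.map id .inr)))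
  start := .inl G.start
  final := .inr H.final

/-- The flowchart executing `G` an arbitrary number of times. The new node `none` is both its
start and its end; it is connected with `G` by edges with action `skip`. -/
def loop (skip : α) (G : Flowchart α Q) : Flowchart α (Option Q) where
  edges := (none, skip, some G.start) :: (some G.final, skip, none) ::
    G.edges.map (Prod.map some (Prod.map id some))
  start := none
  final := none

variable {step : α → X → X → Prop}

theorem rel_single (a : α) : (single a).Rel step = step a := by
  ext x y
  refine ⟨fun h => ?_, fun h => .single ⟨a, by simp [single], h⟩⟩
  rcases h.cases_head with h | ⟨⟨q, z⟩, ⟨b, hb, hxz⟩, h⟩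
  · simp [single] at h
  obtain ⟨rfl, rfl⟩ : b = a ∧ q = true := by simpa [single] using hb
  rcases h.cases_head with h | ⟨_, ⟨_, hb, _⟩, _⟩
  · obtain rfl : z = y := congrArg Prod.snd h
    exact hxz
  · simp [single] at hb

variable {skip : α}

theorem rel_seq (hskip : step skip = Eq) (G : Flowchart α Q)
    (H : Flowchart α Q') : (seq skip G H).Rel step = Comp (G.Rel step) (H.Rel step) := by
  ext x y
  constructor
  · have invariant : ∀ c, ReflTransGen ((seq skip G H).Step step) (.inl G.start, x) c →
        Sum.elim (fun q => ReflTransGen (G.Step step) (G.start, x) (q, c.2))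
          (fun q => ∃ z, G.Rel step x z ∧ ReflTransGen (H.Step step) (H.start, z) (q, c.2))
          c.1 := by
      intro c h
      induction h with
      | refl => exact .refl
      | @tail c c' _ h ih =>
        obtain ⟨q, z⟩ := c
        obtain ⟨q', z'⟩ := c'
        obtain ⟨a, ha, hz⟩ := h
        simp only [seq, List.mem_cons, List.mem_append, List.mem_map, Prod.mk.injEq,
          Prod.map] at ha
        rcases ha with ⟨rfl, rfl, rfl⟩ | ⟨e, he, rfl, rfl, rfl⟩ | ⟨e, he, rfl, rfl, rfl⟩
        · obtain rfl : z = z' := hskip ▸ hz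
          exact ⟨z, ih, .refl⟩
        · exact ih.tail ⟨_, he, hz⟩
        · obtain ⟨u, hu, hz'⟩ := ih
          exact ⟨u, hu, hz'.tail ⟨_, he, hz⟩⟩
    exact invariant _
  · rintro ⟨z, hxz, hzy⟩
    have left := hxz.lift (p := (seq skip G H).Step step) (Prod.map .inl id)
      fun _ _ ⟨a, ha, h⟩ => ⟨a, by simp [seq, Prod.map, ha], h⟩
    have right := hzy.lift (p := (seq skip G H).Step step) (Prod.map .inr id)
      fun _ _ ⟨a, ha, h⟩ => ⟨a, by simp [seq, Prod.map, ha], h⟩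
    exact (left.tail ⟨skip, by simp [seq], by simp [hskip]⟩).trans right

theorem rel_loop (hskip : step skip = Eq) (G : Flowchart α Q) :
    (loop skip G).Rel step = ReflTransGen (G.Rel step) := by
  ext x y
  constructor
  · have invariant : ∀ c, ReflTransGen ((loop skip G).Step step) (none, x) c →
        c.1.elim (ReflTransGen (G.Rel step) x c.2) fun q =>
          ∃ z, ReflTransGen (G.Rel step) x z ∧
            ReflTransGen (G.Step step) (G.start, z) (q, c.2) := by
      intro c h
      induction h with
      | refl => exact .refl
      | @tail c c' _ h ih =>
        obtain ⟨q, z⟩ := c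
        obtain ⟨q', z'⟩ := c'
        obtain ⟨a, ha, hz⟩ := h
        simp only [loop, List.mem_cons, List.mem_map, Prod.mk.injEq, Prod.map] at ha
        rcases ha with ⟨rfl, rfl, rfl⟩ | ⟨rfl, rfl, rfl⟩ | ⟨e, he, rfl, rfl, rfl⟩
        · obtain rfl : z = z' := hskip ▸ hz
          exact ⟨z, ih, .refl⟩
        · obtain rfl : z = z' := hskip ▸ hz
          obtain ⟨u, hu, hz'⟩ := ih
          exact hu.tail hz'
        · obtain ⟨u, hu, hz'⟩ := ih
          exact ⟨u, hu, hz'.tail ⟨_, he, hz⟩⟩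
    exact invariant _
  · intro h
    induction h with
    | refl => exact .refl
    | @tail u v _ huv ih =>
      have body := huv.lift (p := (loop skip G).Step step) (Prod.map some id)
        fun _ _ ⟨a, ha, h⟩ => ⟨a, by simp [loop, Prod.map, ha], h⟩
      have enter : (loop skip G).Step step (none, u) (some G.start, u) :=
        ⟨skip, by simp [loop], by simp [hskip]⟩
      have leave : (loop skip G).Step step (some G.final, v) (none, v) :=
        ⟨skip, by simp [loop], by simp [hskip]⟩
      exact ((ih.tail enter).trans body).tail leave

end Flowchart

/-- `P` is the input-output relation of a flowchart with finitely many nodes over actions with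
semantics `step`. -/
def IsFlowchartRel {α X : Type*} (step : α → X → X → Prop) (P : X → X → Prop) : Prop :=
  ∃ (Q : Type) (_ : Fintype Q) (G : Flowchart α Q), G.Rel step = P

namespace IsFlowchartRel

variable {α X : Type*} {step : α → X → X → Prop} {P P' : X → X → Prop}

theorem single (a : α) : IsFlowchartRel step (step a) :=
  ⟨Bool, inferInstance, .single a, Flowchart.rel_single a⟩

theorem comp {skip : α} (hskip : step skip = Eq) (hP : IsFlowchartRel step P)
    (hP' : IsFlowchartRel step P') : IsFlowchartRel step (Comp P P') := by
  obtain ⟨Q, _, G, rfl⟩ := hP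
  obtain ⟨Q', _, G', rfl⟩ := hP'
  exact ⟨Q ⊕ Q', inferInstance, .seq skip G G', Flowchart.rel_seq hskip G G'⟩

theorem reflTransGen {skip : α} (hskip : step skip = Eq) (hP : IsFlowchartRel step P) :
    IsFlowchartRel step (ReflTransGen P) := by
  obtain ⟨Q, _, G, rfl⟩ := hP
  exact ⟨Option Q, inferInstance, .loop skip G, Flowchart.rel_loop hskip G⟩

end IsFlowchartRel

/-! ### Counters as cardinalities of registers -/

/-- An assignment of finite sets of data to registers. -/
abbrev Assignment : Type := ℕ → Finset ℕ

/-- The actions on registers out of which automata are built: `test r q` is an equality test,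
`insertNew r q` stores in `q` the content of `r` together with an input that is not in `r`, and
`copy r q` stores in `q` the content of `r`. -/
inductive SetOp : Type
  | test (r q : ℕ)
  | insertNew (r q : ℕ)
  | copy (r q : ℕ)

/-- The effect of an action on the registers. -/
def SetOp.Step : SetOp → Assignment → Assignment → Prop
  | test r r', f, f' => f r = f r' ∧ f = f'
  | insertNew r r', f, f' => ∃ d ∉ f r, f' = Function.update f r' (insert d (f r))
  | copy r r', f, f' => f' = Function.update f r' (f r)

namespace SetOp

theorem step_test_self (r : ℕ) : (test r r).Step = Eq := by
  ext f f'
  exact and_iff_right rfl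

theorem exists_step_insertNew (r r' : ℕ) (f : Assignment) : ∃ f', (insertNew r r').Step f f' :=
  have ⟨d, hd⟩ := Infinite.exists_notMem_finset (f r)
  ⟨_, d, hd, rfl⟩

theorem reflTransGen_insertNew_self_iff {r : ℕ} {f f' : Assignment} :
    ReflTransGen (insertNew r r).Step f f' ↔ ∃ S, f r ⊆ S ∧ f' = Function.update f r S := by
  constructor
  · intro h
    induction h with
    | refl => exact ⟨f r, subset_rfl, by simp⟩
    | tail _ h ih =>
      obtain ⟨S, hS, rfl⟩ := ih
      obtain ⟨d, -, rfl⟩ := h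
      exact ⟨insert d S, hS.trans (Finset.subset_insert d S), by simp⟩
  · rintro ⟨S, hS, rfl⟩
    rw [← Finset.union_eq_right.2 hS]
    clear hS
    induction S using Finset.induction_on with
    | empty => simpa using ReflTransGen.refl
    | insert d S _ ih =>
      by_cases hd : d ∈ f r ∪ S
      · rwa [Finset.union_insert, Finset.insert_eq_of_mem hd]
      · exact ih.tail ⟨d, by simpa using hd, by simp⟩

/-- The action on registers that simulates decrementing a counter held in register `r`: an
arbitrary set is guessed in register `1`, and replaces the content of `r` if adding one more
element to it, in register `2`, gives back the content of `r`. -/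
def RemoveOne (r : ℕ) : Assignment → Assignment → Prop :=
  Comp (copy 0 1).Step <| Comp (ReflTransGen (insertNew 1 1).Step) <|
    Comp (insertNew 1 2).Step <| Comp (test r 2).Step (copy 1 r).Step

theorem isFlowchartRel_removeOne (r : ℕ) : IsFlowchartRel SetOp.Step (RemoveOne r) :=
  have skip := step_test_self 0
  (IsFlowchartRel.single _).comp skip <| ((IsFlowchartRel.single _).reflTransGen skip).comp skip <|
    (IsFlowchartRel.single _).comp skip <| (IsFlowchartRel.single _).comp skip <| .single _

theorem removeOne_iff {r : ℕ} (hr : 2 < r) {f f' : Assignment} (hf : f 0 = ∅) :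
    RemoveOne r f f' ↔ ∃ S, ∃ d ∉ S, f r = insert d S ∧
      f' = Function.update (Function.update (Function.update f 1 S) 2 (f r)) r S := by
  have h1 : r ≠ 1 := by omega
  have h2 : r ≠ 2 := by omega
  constructor
  · rintro ⟨_, rfl, _, hguess, _, ⟨d, hd, rfl⟩, _, ⟨htest, rfl⟩, rfl⟩
    obtain ⟨S, -, rfl⟩ := reflTransGen_insertNew_self_iff.1 hguess
    simp only [Function.update_self] at hd
    simp only [Function.update_idem, Function.update_self, Function.update_of_ne h1,
      Function.update_of_ne h2] at htest
    exact ⟨S, d, hd, htest, by simp [htest]⟩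
  · rintro ⟨S, d, hd, hS, rfl⟩
    exact ⟨_, rfl, _, reflTransGen_insertNew_self_iff.2 ⟨S, by simp [hf], rfl⟩, _,
      ⟨d, by simpa using hd, rfl⟩, _, ⟨by simp [h1, h2, hS], rfl⟩, by simp [Step, hS]⟩

end SetOp

/-- The registers `f` represent the counters `s`: register `0` is empty, `1` and `2` are scratch
registers, and the value of counter `r` is the cardinality of register `r + 3`. -/
def Represents (f : Assignment) (s : ℕ → ℕ) : Prop :=
  f 0 = ∅ ∧ ∀ r, (f (r + 3)).card = s r

theorem Represents.congr {f f' : Assignment} {s : ℕ → ℕ} (h : Represents f s)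
    (hf : ∀ r, r ≠ 1 → r ≠ 2 → f' r = f r) : Represents f' s :=
  ⟨by rw [hf 0 (by simp) (by simp), h.1], fun r => by rw [hf _ (by simp) (by simp), h.2]⟩

theorem Represents.update {f : Assignment} {s : ℕ → ℕ} (h : Represents f s) (r : ℕ)
    {S : Finset ℕ} {n : ℕ} (hS : S.card = n) :
    Represents (Function.update f (r + 3) S) (Function.update s r n) := by
  refine ⟨by rw [Function.update_of_ne (by simp), h.1], fun q => ?_⟩
  obtain rfl | hq := eq_or_ne q r
  · simpa using hS
  · rw [Function.update_of_ne (by simpa using hq), Function.update_of_ne hq, h.2]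

theorem Represents.insertNew {f f' : Assignment} {s : ℕ → ℕ} {r : ℕ} (h : Represents f s)
    (hstep : (SetOp.insertNew (r + 3) (r + 3)).Step f f') :
    Represents f' (Function.update s r (s r + 1)) := by
  obtain ⟨d, hd, rfl⟩ := hstep
  exact h.update r (by rw [Finset.card_insert_of_notMem hd, h.2])

/-- A relation between counter states is realizable if it is bisimilar to the input-output relation
of some flowchart over register actions. -/
def Realizable (ρ : (ℕ → ℕ) → (ℕ → ℕ) → Prop) : Prop :=
  ∃ P, IsFlowchartRel SetOp.Step P ∧
    IsSimulation Represents P ρ ∧ IsSimulation (flip Represents) ρ P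

namespace Realizable

variable {ρ ρ' : (ℕ → ℕ) → (ℕ → ℕ) → Prop}

theorem comp : Realizable ρ → Realizable ρ' → Realizable (Comp ρ ρ')
  | ⟨_, hP, fwd, bwd⟩, ⟨_, hP', fwd', bwd'⟩ =>
    ⟨_, hP.comp (SetOp.step_test_self 0) hP', fwd.comp fwd', bwd.comp bwd'⟩

theorem reflTransGen : Realizable ρ → Realizable (ReflTransGen ρ)
  | ⟨_, hP, fwd, bwd⟩ =>
    ⟨_, hP.reflTransGen (SetOp.step_test_self 0), fwd.reflTransGen, bwd.reflTransGen⟩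

theorem isZero (r : ℕ) : Realizable fun s s' => s r = 0 ∧ s = s' := by
  refine ⟨_, .single (.test (r + 3) 0), ?_, ?_⟩
  · rintro f s _ hf ⟨htest, rfl⟩
    exact ⟨s, hf, by rw [← hf.2, htest, hf.1, Finset.card_empty], rfl⟩
  · rintro s f _ hf ⟨hzero, rfl⟩
    exact ⟨f, hf, by rw [hf.1, ← Finset.card_eq_zero, hf.2, hzero], rfl⟩

theorem dec (r : ℕ) :
    Realizable fun s s' => 0 < s r ∧ s' = Function.update s r (s r - 1) := by
  refine ⟨_, SetOp.isFlowchartRel_removeOne (r + 3), ?_, ?_⟩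
  · intro f s f' hf h
    obtain ⟨S, d, hd, hS, rfl⟩ := (SetOp.removeOne_iff (by omega) hf.1).1 h
    have hcard : s r = S.card + 1 := by rw [← hf.2, hS, Finset.card_insert_of_notMem hd]
    refine ⟨_, Represents.update (hf.congr fun q h1 h2 => ?_) r ?_, by omega, rfl⟩
    · rw [Function.update_of_ne h2, Function.update_of_ne h1]
    · omega
  · rintro s f _ hf ⟨hpos, rfl⟩
    obtain ⟨d, hd⟩ := Finset.card_pos.1 ((hf.2 r).symm ▸ hpos)
    refine ⟨_, Represents.update (hf.congr fun q h1 h2 => ?_) r ?_,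
      (SetOp.removeOne_iff (by omega) hf.1).2
        ⟨_, d, Finset.notMem_erase d _, (Finset.insert_erase hd).symm, rfl⟩⟩
    · rw [Function.update_of_ne h2, Function.update_of_ne h1]
    · rw [Finset.card_erase_of_mem hd, hf.2]

end Realizable

theorem reflTransGen_guarded_iff {X : Type*} {f : X → X} {m : X → ℕ}
    (hm : ∀ u, m (f u) = m u - 1) {s t : X} :
    (ReflTransGen (fun u v => 0 < m u ∧ v = f u) s t ∧ m t = 0) ↔ t = f^[m s] s := by
  constructor
  · rintro ⟨h, ht⟩
    induction h using ReflTransGen.head_induction_on with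
    | refl => rw [ht, Function.iterate_zero_apply]
    | @head u _ hstep _ ih =>
      obtain ⟨hu, rfl⟩ := hstep
      rw [ih, hm, ← Function.iterate_succ_apply, Nat.succ_eq_add_one, Nat.sub_add_cancel hu]
  · rintro rfl
    induction hn : m s generalizing s with
    | zero => exact ⟨.refl, hn⟩
    | succ n ih =>
      obtain ⟨h, ht⟩ := ih (s := f s) (by rw [hm, hn, Nat.add_sub_cancel])
      exact ⟨.head ⟨by omega, rfl⟩ h, ht⟩

/-- A function on counter states is counter-computable if its graph is realizable. -/
def CounterComputable (F : (ℕ → ℕ) → ℕ → ℕ) : Prop :=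
  Realizable fun s s' => s' = F s

namespace CounterComputable

variable {F G : (ℕ → ℕ) → ℕ → ℕ}

theorem inc (r : ℕ) : CounterComputable fun s => Function.update s r (s r + 1) := by
  refine ⟨_, .single (.insertNew (r + 3) (r + 3)), fun f s f' hf h => ⟨_, hf.insertNew h, rfl⟩, ?_⟩
  rintro s f _ hf rfl
  obtain ⟨f', h⟩ := SetOp.exists_step_insertNew (r + 3) (r + 3) f
  exact ⟨f', hf.insertNew h, h⟩

theorem assign (r r' : ℕ) : CounterComputable fun s => Function.update s r' (s r) := by
  refine ⟨_, .single (.copy (r + 3) (r' + 3)), ?_, ?_⟩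
  · rintro f s _ hf rfl
    exact ⟨_, hf.update r' (hf.2 r), rfl⟩
  · rintro s f _ hf rfl
    exact ⟨_, hf.update r' (hf.2 r), rfl⟩

theorem clear (r : ℕ) : CounterComputable fun s => Function.update s r 0 := by
  refine ⟨_, .single (.copy 0 (r + 3)), ?_, ?_⟩
  · rintro f s _ hf rfl
    exact ⟨_, hf.update r (by rw [hf.1, Finset.card_empty]), rfl⟩
  · rintro s f _ hf rfl
    exact ⟨_, hf.update r (by rw [hf.1, Finset.card_empty]), rfl⟩

theorem comp (hG : CounterComputable G) (hF : CounterComputable F) :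
    CounterComputable fun s => G (F s) := by
  have graph_comp : Comp (fun s s' => s' = F s) (fun s s' => s' = G s) =
      fun s s' => s' = G (F s) := by
    ext s s'
    simp [Comp]
  exact (congrArg Realizable graph_comp).mp (Realizable.comp hF hG)

theorem iterate (hF : CounterComputable F) (x : ℕ) (hx : ∀ s, F s x = s x) :
    CounterComputable fun s => (fun u => F (Function.update u x (u x - 1)))^[s x] s := by
  have round_eq : Comp (fun s s' => 0 < s x ∧ s' = Function.update s x (s x - 1))
      (fun s s' => s' = F s) = fun u v => 0 < u x ∧ v = F (Function.update u x (u x - 1)) := by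
    ext u v
    simp [Comp, and_assoc]
  have loop_eq : Comp (ReflTransGen fun u v => 0 < u x ∧ v = F (Function.update u x (u x - 1)))
      (fun s s' => s x = 0 ∧ s = s') =
      fun s s' => s' = (fun u => F (Function.update u x (u x - 1)))^[s x] s := by
    ext s s'
    rw [← reflTransGen_guarded_iff (m := fun u : ℕ → ℕ => u x) (fun u => by simp [hx])]
    simp [Comp]
  have round := (Realizable.dec x).comp hF
  rw [round_eq] at round
  exact (congrArg Realizable loop_eq).mp (round.reflTransGen.comp (.isZero x))

end CounterComputable

/-! ### Primitive recursive functions on counters -/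

/-- The function `f` can be computed from counters `args` to counter `base`, with only counters
from `base` on changed. All arguments have to lie below `base`, so that they are preserved. -/
def VectorComputable {n : ℕ} (f : List.Vector ℕ n → ℕ) : Prop :=
  ∀ (args : Fin n → ℕ) (base : ℕ), (∀ i, args i < base) →
    ∃ F, CounterComputable F ∧
      ∀ s, F s base = f (List.Vector.ofFn fun i => s (args i)) ∧ ∀ r < base, F s r = s r

namespace VectorComputable

variable {m n : ℕ} {f : List.Vector ℕ n → ℕ} {g : Fin n → List.Vector ℕ m → ℕ}

theorem zero : VectorComputable fun _ : List.Vector ℕ 0 => 0 := fun _ base _ =>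
  ⟨_, .clear base, fun _ => ⟨Function.update_self .., fun _ hr => Function.update_of_ne hr.ne ..⟩⟩

theorem get (i : Fin n) : VectorComputable fun v => v.get i := fun args base _ =>
  ⟨_, .assign (args i) base, fun _ =>
    ⟨by simp, fun _ hr => Function.update_of_ne hr.ne ..⟩⟩

theorem succ : VectorComputable fun v : List.Vector ℕ 1 => v.head.succ := fun args base _ =>
  ⟨_, (CounterComputable.inc base).comp (.assign (args 0) base), fun _ =>
    ⟨by simp [List.Vector.ofFn], fun r hr => by simp [hr.ne]⟩⟩

theorem exists_compute_family (hg : ∀ i, VectorComputable (g i)) {args : Fin m → ℕ} {base : ℕ}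
    (hargs : ∀ i, args i < base) (j : ℕ) :
    ∃ F, CounterComputable F ∧ ∀ s,
      (∀ i : Fin n, i < j → F s (base + i) = g i (List.Vector.ofFn fun i => s (args i))) ∧
        ∀ r < base, F s r = s r := by
  induction j with
  | zero => exact ⟨_, .assign base base, fun s => by simp⟩
  | succ j ih =>
    obtain ⟨F, hF, hFs⟩ := ih
    by_cases hj : j < n
    · obtain ⟨G, hG, hGs⟩ := hg ⟨j, hj⟩ args (base + j) fun i => (hargs i).trans_le (by omega)
      refine ⟨_, hG.comp hF, fun s => ⟨fun i hi => ?_, fun r hr => ?_⟩⟩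
      · obtain hi | hi := Nat.lt_succ_iff_lt_or_eq.1 hi
        · rw [(hGs _).2 _ (by omega), (hFs s).1 i hi]
        · obtain rfl : i = ⟨j, hj⟩ := Fin.ext hi
          rw [(hGs _).1]
          simp only [(hFs s).2 _ (hargs _)]
      · rw [(hGs _).2 r (by omega), (hFs s).2 r hr]
    · exact ⟨F, hF, fun s => ⟨fun i _ => (hFs s).1 i (by omega), (hFs s).2⟩⟩

theorem comp (hf : VectorComputable f) (hg : ∀ i, VectorComputable (g i)) :
    VectorComputable fun v => f (List.Vector.ofFn fun i => g i v) := by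
  intro args base hargs
  obtain ⟨G, hG, hGs⟩ := exists_compute_family hg hargs n
  obtain ⟨F, hF, hFs⟩ := hf (fun i => base + i) (base + n) fun i => by omega
  refine ⟨_, (CounterComputable.assign (base + n) base).comp (hF.comp hG), fun s => ⟨?_, ?_⟩⟩
  · rw [Function.update_self, (hFs _).1]
    simp only [(hGs s).1 _ (Fin.isLt _)]
  · intro r hr
    rw [Function.update_of_ne hr.ne, (hFs _).2 r (by omega), (hGs s).2 r hr]

section Prec

variable {g : List.Vector ℕ (n + 2) → ℕ} {args : Fin (n + 1) → ℕ} {base : ℕ}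

theorem exists_prec_init (hf : VectorComputable f) (hargs : ∀ i, args i < base) :
    ∃ F, CounterComputable F ∧ ∀ s,
      F s base = f (List.Vector.ofFn fun i => s (args (Fin.succ i))) ∧
      F s (base + 1) = s (args 0) ∧ F s (base + 2) = 0 ∧ ∀ r < base, F s r = s r := by
  obtain ⟨F, hF, hFs⟩ := hf (fun i => args i.succ) base fun i => hargs _
  refine ⟨_, (CounterComputable.clear (base + 2)).comp
    ((CounterComputable.assign (args 0) (base + 1)).comp hF),
    fun s => ⟨?_, ?_, by simp, fun r hr => ?_⟩⟩
  · simp [(hFs s).1]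
  · simp [(hFs s).2 _ (hargs 0)]
  · rw [Function.update_of_ne (by omega), Function.update_of_ne (by omega), (hFs s).2 r hr]

theorem exists_prec_step (hg : VectorComputable g) (hargs : ∀ i, args i < base) :
    ∃ G, CounterComputable G ∧ ∀ s,
      G s base = g (s (base + 2) ::ᵥ s base ::ᵥ
        List.Vector.ofFn fun i => s (args (Fin.succ i))) ∧
      G s (base + 1) = s (base + 1) ∧ G s (base + 2) = s (base + 2) + 1 ∧
      ∀ r < base, G s r = s r := by
  obtain ⟨G, hG, hGs⟩ := hg (Fin.cons (base + 2) (Fin.cons base fun i => args i.succ)) (base + 3) <|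
    Fin.forall_fin_succ.2 ⟨by simp, Fin.forall_fin_succ.2 ⟨by simp, fun i =>
      (hargs i.succ).trans (by omega)⟩⟩
  refine ⟨_, (CounterComputable.inc (base + 2)).comp
    ((CounterComputable.assign (base + 3) base).comp hG), fun s => ⟨?_, ?_, ?_, fun r hr => ?_⟩⟩
  · simp [(hGs s).1, List.Vector.ofFn]
  · simp [(hGs s).2]
  · simp [(hGs s).2]
  · rw [Function.update_of_ne (by omega), Function.update_of_ne (by omega),
      (hGs s).2 r (by omega)]

theorem prec (hf : VectorComputable f) (hg : VectorComputable g) :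
    VectorComputable fun v : List.Vector ℕ (n + 1) =>
      v.head.rec (f v.tail) fun y ih => g (y ::ᵥ ih ::ᵥ v.tail) := by
  intro args base hargs
  obtain ⟨F, hF, hFs⟩ := exists_prec_init hf hargs
  obtain ⟨G, hG, hGs⟩ := exists_prec_step hg hargs
  refine ⟨_, (hG.iterate (base + 1) fun s => (hGs s).2.1).comp hF, fun s => ?_⟩
  obtain ⟨hvalue, hrounds, hindex, hbelow⟩ := hFs s
  set tail := List.Vector.ofFn fun i : Fin n => s (args i.succ) with htail
  set round := fun u : ℕ → ℕ => G (Function.update u (base + 1) (u (base + 1) - 1)) with hround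
  have invariant : ∀ k,
      round^[k] (F s) base = k.rec (f tail) (fun y ih => g (y ::ᵥ ih ::ᵥ tail)) ∧
      round^[k] (F s) (base + 2) = k ∧ ∀ r < base, round^[k] (F s) r = s r := by
    intro k
    induction k with
    | zero => exact ⟨hvalue, hindex, hbelow⟩
    | succ k ih =>
      obtain ⟨hv, hi, hb⟩ := ih
      have hargs' : ∀ i : Fin n, args i.succ ≠ base + 1 := fun i => by
        have := hargs i.succ
        omega
      simp only [Function.iterate_succ_apply', hround, (hGs _).1, (hGs _).2.2.1]
      refine ⟨?_, ?_, fun r hr => ?_⟩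
      · simp [← hround, hv, hi, hargs', hb _ (hargs _), htail]
      · simp [← hround, hi]
      · rw [(hGs _).2.2.2 r hr, Function.update_of_ne (by omega)]
        exact hb r hr
  rw [hrounds]
  exact ⟨(invariant _).1, (invariant _).2.2⟩

end Prec

theorem of_primrec' {f : List.Vector ℕ n → ℕ} (hf : Nat.Primrec' f) : VectorComputable f := by
  induction hf with
  | zero => exact zero
  | succ => exact succ
  | get i => exact get i
  | comp g _ _ hf hg => exact hf.comp hg
  | prec _ _ hf hg => exact hf.prec hg

end VectorComputable

theorem reflTransGen_inc_iff {r : ℕ} {s s' : ℕ → ℕ} :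
    ReflTransGen (fun u v => v = Function.update u r (u r + 1)) s s' ↔
      ∃ t ≥ s r, s' = Function.update s r t := by
  constructor
  · intro h
    induction h with
    | refl => exact ⟨s r, le_rfl, by simp⟩
    | tail _ h ih =>
      obtain ⟨t, ht, rfl⟩ := ih
      exact ⟨t + 1, by omega, by simpa using h⟩
  · rintro ⟨t, ht, rfl⟩
    induction t, ht using Nat.le_induction with
    | base => simpa using ReflTransGen.refl
    | succ t _ ih => exact ih.tail (by simp)

theorem Realizable.exists_of_primrec₂ {g : ℕ → ℕ → ℕ} (hg : Primrec₂ g) :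
    ∃ ρ, Realizable ρ ∧ ∀ n, (∃ s, ρ (Function.update 0 0 n) s) ↔ ∃ t, 0 < g n t := by
  obtain ⟨F, hF, hFs⟩ := VectorComputable.of_primrec' (Nat.Primrec'.prim_iff₂.2 hg) ![0, 1] 2
    (Fin.forall_fin_two.2 (by simp))
  have hvalue (n t : ℕ) : F (Function.update (Function.update 0 0 n) 1 t) 2 = g n t := by
    simp [(hFs _).1, List.Vector.ofFn]
  refine ⟨_, (Realizable.reflTransGen (CounterComputable.inc 1)).comp
    (Realizable.comp hF (.dec 2)), fun n => ⟨?_, ?_⟩⟩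
  · rintro ⟨s, _, hguess, _, rfl, hpos, -⟩
    obtain ⟨t, -, rfl⟩ := reflTransGen_inc_iff.1 hguess
    exact ⟨t, hvalue n t ▸ hpos⟩
  · rintro ⟨t, ht⟩
    exact ⟨_, _, reflTransGen_inc_iff.2 ⟨t, by simp, rfl⟩, _, rfl, (hvalue n t).symm ▸ ht, rfl⟩

theorem eval_dom_iff_exists_evaln_pos (e : Nat.Partrec.Code) (n : ℕ) :
    (e.eval n).Dom ↔ ∃ t, 0 < Encodable.encode (e.evaln t n) := by
  simp only [Part.dom_iff_mem, Nat.Partrec.Code.evaln_complete, Option.mem_def]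
  rw [exists_comm]
  refine exists_congr fun t => ?_
  cases e.evaln t n <;> simp

theorem Realizable.exists_halting (n : ℕ) :
    ∃ ρ, Realizable ρ ∧ ∀ e : Nat.Partrec.Code,
      (∃ s, ρ (Function.update 0 0 (Encodable.encode e)) s) ↔ (e.eval n).Dom := by
  obtain ⟨ρ, hρ, h⟩ := exists_of_primrec₂ (g := fun e t =>
    Encodable.encode ((Denumerable.ofNat Nat.Partrec.Code e).evaln t n)) <|
    Primrec.encode.comp <| Nat.Partrec.Code.primrec_evaln.comp <|
      (Primrec.snd.pair ((Primrec.ofNat _).comp .fst)).pair (.const n)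
  exact ⟨ρ, hρ, fun e => by rw [h, eval_dom_iff_exists_evaln_pos, Denumerable.ofNat_encode]⟩

/-! ### Automata executing flowcharts -/

/-- Transition `t` can lead from register assignment `f` to `f'` for some input data value. -/
def CEqTrans.StoreStep {k : ℕ} (t : CEqTrans k) (f f' : Assignment) : Prop :=
  ∃ d, (∀ r ∈ t.gIn, d ∈ f r) ∧ (∀ r ∈ t.gNin, d ∉ f r) ∧
    (∀ r, ∀ r' ∈ t.gEq.getD r [], f r' = f r) ∧ f' = t.apply f d

/-- The transition `t` with its source and target replaced. -/
def CEqTrans.between {k : ℕ} (t : CEqTrans k) (q q' : ℕ) : CEqTrans k :=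
  { t with tgt := q', src := q }

/-- The part of `CRsAEq.WellFormed` that concerns the registers of a transition. -/
def CEqTrans.WellFormed {k : ℕ} (t : CEqTrans k) (nR : ℕ) : Prop :=
  (∀ r ∈ t.gIn, r < nR) ∧ (∀ r ∈ t.gNin, r < nR) ∧ (∀ r ∈ t.gIn, r ∉ t.gNin) ∧
    t.gEq.length = nR ∧ (∀ l ∈ t.gEq, ∀ r ∈ l, r < nR) ∧
    t.upd.length = nR ∧ ∀ l ∈ t.upd, ∀ r, some r ∈ l → r < nR

/-- A transition as the tuple of its components. -/
def CEqTrans.equivProd {k : ℕ} : CEqTrans k ≃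
    ℕ × Fin k × List ℕ × List ℕ × List (List ℕ) × List (List (Option ℕ)) × ℕ where
  toFun t := (t.src, t.letter, t.gIn, t.gNin, t.gEq, t.upd, t.tgt)
  invFun p := ⟨p.1, p.2.1, p.2.2.1, p.2.2.2.1, p.2.2.2.2.1, p.2.2.2.2.2.1, p.2.2.2.2.2.2⟩

theorem CEqTrans.primrec₂_between {k : ℕ} (t : CEqTrans k) :
    Primrec₂ t.between := by
  have hprod : Primrec fun p : ℕ × ℕ =>
      (p.1, t.letter, t.gIn, t.gNin, t.gEq, t.upd, p.2) :=
    Primrec.fst.pair <| (Primrec.const t.letter).pair <| (Primrec.const t.gIn).pair <|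
      (Primrec.const t.gNin).pair <| (Primrec.const t.gEq).pair <|
      (Primrec.const t.upd).pair .snd
  exact (Primrec.of_equiv_iff equivProd).1 hprod

namespace CRsAEq

variable {k : ℕ} {A : CRsAEq k}

/-- One step of an automaton on an unspecified input. -/
def AnyStep (A : CRsAEq k) (c c' : ℕ × Assignment) : Prop :=
  ∃ x, A.Step c x c'

theorem anyStep_iff {c c' : ℕ × Assignment} :
    A.AnyStep c c' ↔ ∃ t ∈ A.trans, t.src = c.1 ∧ t.tgt = c'.1 ∧ t.StoreStep c.2 c'.2 := by
  constructor
  · rintro ⟨⟨_, d⟩, t, ht, hsrc, -, hin, hnin, heq, rfl⟩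
    exact ⟨t, ht, hsrc, rfl, d, hin, hnin, heq, rfl⟩
  · rintro ⟨t, ht, hsrc, htgt, d, hin, hnin, heq, happly⟩
    exact ⟨(t.letter, d), t, ht, hsrc, rfl, hin, hnin, heq, Prod.ext htgt.symm happly⟩

theorem exists_run_iff {c c' : ℕ × Assignment} :
    (∃ w, A.Run c w c') ↔ ReflTransGen A.AnyStep c c' := by
  constructor
  · rintro ⟨w, h⟩
    induction h with
    | nil => exact .refl
    | cons hstep _ ih => exact .head ⟨_, hstep⟩ ih
  · intro h
    induction h using ReflTransGen.head_induction_on with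
    | refl => exact ⟨[], .nil _⟩
    | head hstep _ ih =>
      obtain ⟨x, hx⟩ := hstep
      obtain ⟨w, hw⟩ := ih
      exact ⟨x :: w, .cons hx hw⟩

/-- `A` accepts some data word when its registers are initialized with `f`. -/
def AcceptsFrom (A : CRsAEq k) (f : Assignment) : Prop :=
  ∃ q ∈ A.I, ∃ c, ReflTransGen A.AnyStep (q, f) c ∧ c.1 ∈ A.F

theorem lang_nonempty_iff : A.Lang.Nonempty ↔ A.AcceptsFrom fun _ => ∅ := by
  simp only [AcceptsFrom, ← exists_run_iff]
  constructor
  · rintro ⟨w, q, hq, c, hw, hc⟩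
    exact ⟨q, hq, c, ⟨w, hw⟩, hc⟩
  · rintro ⟨q, hq, c, ⟨w, hw⟩, hc⟩
    exact ⟨w, q, hq, c, hw, hc⟩

/-- Adds to `A` a new initial state, from which copies of transition `t` lead to the initial states
of `A`. -/
def prepend (t : CEqTrans k) (A : CRsAEq k) : CRsAEq k where
  nQ := A.nQ + 1
  nR := A.nR
  trans := A.I.map (t.between A.nQ) ++ A.trans
  I := [A.nQ]
  F := A.F

variable {t : CEqTrans k}

theorem WellFormed.prepend (hA : A.WellFormed) (ht : t.WellFormed A.nR) :
    (A.prepend t).WellFormed := by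
  obtain ⟨hI, hF, htrans⟩ := hA
  refine ⟨by simp [CRsAEq.prepend], fun q hq => (hF q hq).trans (Nat.lt_succ_self _), ?_⟩
  intro u hu
  obtain hu | hu := List.mem_append.1 hu
  · obtain ⟨q, hq, rfl⟩ := List.mem_map.1 hu
    exact ⟨Nat.lt_succ_self _, (hI q hq).trans (Nat.lt_succ_self _), ht⟩
  · obtain ⟨hsrc, htgt, hu⟩ := htrans u hu
    exact ⟨hsrc.trans (Nat.lt_succ_self _), htgt.trans (Nat.lt_succ_self _), hu⟩

theorem nR_iterate_prepend (n : ℕ) : ((prepend t)^[n] A).nR = A.nR := by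
  induction n with
  | zero => rfl
  | succ n ih => rwa [Function.iterate_succ_apply']

theorem WellFormed.iterate_prepend (hA : A.WellFormed) (ht : t.WellFormed A.nR) (n : ℕ) :
    ((CRsAEq.prepend t)^[n] A).WellFormed := by
  induction n with
  | zero => exact hA
  | succ n ih =>
    rw [Function.iterate_succ_apply']
    exact ih.prepend ((nR_iterate_prepend n).symm ▸ ht)

theorem anyStep_prepend_start {f : Assignment} {c : ℕ × Assignment} (hA : A.WellFormed) :
    (A.prepend t).AnyStep (A.nQ, f) c ↔ c.1 ∈ A.I ∧ t.StoreStep f c.2 := by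
  rw [anyStep_iff]
  constructor
  · rintro ⟨u, hu, hsrc, htgt, hstep⟩
    obtain hu | hu := List.mem_append.1 hu
    · obtain ⟨q, hq, rfl⟩ := List.mem_map.1 hu
      exact ⟨htgt ▸ hq, hstep⟩
    · exact absurd hsrc (hA.2.2 u hu).1.ne
  · rintro ⟨hc, hstep⟩
    exact ⟨_, List.mem_append_left _ (List.mem_map_of_mem hc), rfl, rfl, hstep⟩

theorem anyStep_prepend {c c' : ℕ × Assignment} (hc : c.1 < A.nQ) :
    (A.prepend t).AnyStep c c' ↔ A.AnyStep c c' := by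
  simp only [anyStep_iff]
  refine ⟨fun ⟨u, hu, hsrc, h⟩ => ?_, fun ⟨u, hu, h⟩ => ⟨u, List.mem_append_right _ hu, h⟩⟩
  obtain hu | hu := List.mem_append.1 hu
  · obtain ⟨q, -, rfl⟩ := List.mem_map.1 hu
    exact absurd hsrc hc.ne'
  · exact ⟨u, hu, hsrc, h⟩

theorem reflTransGen_anyStep_prepend {c c' : ℕ × Assignment} (hA : A.WellFormed)
    (hc : c.1 < A.nQ) :
    ReflTransGen (A.prepend t).AnyStep c c' ↔ ReflTransGen A.AnyStep c c' := by
  have lt_of_step {u v} (h : A.AnyStep u v) : u.1 < A.nQ ∧ v.1 < A.nQ := by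
    obtain ⟨u, hu, hsrc, htgt, -⟩ := anyStep_iff.1 h
    exact ⟨hsrc ▸ (hA.2.2 u hu).1, htgt ▸ (hA.2.2 u hu).2.1⟩
  constructor
  · intro h
    induction h using ReflTransGen.head_induction_on with
    | refl => exact .refl
    | head hstep _ ih =>
      rw [anyStep_prepend hc] at hstep
      exact .head hstep (ih (lt_of_step hstep).2)
  · exact fun h => h.lift id fun _ _ h => (anyStep_prepend (lt_of_step h).1).2 h

theorem acceptsFrom_prepend {f : Assignment} (hA : A.WellFormed) :
    (A.prepend t).AcceptsFrom f ↔ ∃ f', t.StoreStep f f' ∧ A.AcceptsFrom f' := by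
  constructor
  · rintro ⟨q, hq, c, h, hc⟩
    obtain rfl : q = A.nQ := List.mem_singleton.1 hq
    obtain rfl | ⟨⟨q, f'⟩, hstep, h⟩ := h.cases_head
    · exact absurd (hA.2.1 _ hc) (lt_irrefl _)
    · obtain ⟨hq, ht⟩ := (anyStep_prepend_start hA).1 hstep
      exact ⟨f', ht, q, hq, c, (reflTransGen_anyStep_prepend hA (hA.1 q hq)).1 h, hc⟩
  · rintro ⟨f', ht, q, hq, c, h, hc⟩
    exact ⟨A.nQ, List.mem_singleton_self _, c, .head ((anyStep_prepend_start hA).2 ⟨hq, ht⟩)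
      ((reflTransGen_anyStep_prepend hA (hA.1 q hq)).2 h), hc⟩

/-- An automaton as the tuple of its components. -/
def equivProd : CRsAEq k ≃ ℕ × ℕ × List (CEqTrans k) × List ℕ × List ℕ where
  toFun A := (A.nQ, A.nR, A.trans, A.I, A.F)
  invFun p := ⟨p.1, p.2.1, p.2.2.1, p.2.2.2.1, p.2.2.2.2⟩

theorem primrec_equivProd : Primrec (equivProd (k := k)) :=
  Primrec.of_equiv (e := equivProd)

theorem primrec_prepend (t : CEqTrans k) : Primrec (prepend t) := by
  have hnQ : Primrec fun A : CRsAEq k => A.nQ := Primrec.fst.comp primrec_equivProd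
  have hnR : Primrec fun A : CRsAEq k => A.nR :=
    Primrec.fst.comp <| Primrec.snd.comp primrec_equivProd
  have htrans : Primrec fun A : CRsAEq k => A.trans :=
    Primrec.fst.comp <| Primrec.snd.comp <| Primrec.snd.comp primrec_equivProd
  have hI : Primrec fun A : CRsAEq k => A.I :=
    Primrec.fst.comp <| Primrec.snd.comp <| Primrec.snd.comp <| Primrec.snd.comp primrec_equivProd
  have hF : Primrec fun A : CRsAEq k => A.F :=
    Primrec.snd.comp <| Primrec.snd.comp <| Primrec.snd.comp <| Primrec.snd.comp primrec_equivProd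
  have hnew : Primrec₂ fun (A : CRsAEq k) (q : ℕ) => t.between A.nQ q :=
    t.primrec₂_between.comp (hnQ.comp .fst) .snd
  have hprod : Primrec fun A : CRsAEq k => equivProd (prepend t A) :=
    (Primrec.succ.comp hnQ).pair <| hnR.pair <|
      (Primrec.list_append.comp (Primrec.list_map hI hnew) htrans).pair <|
      (Primrec.list_cons.comp hnQ (.const [])).pair hF
  exact (Primrec.of_equiv_iff equivProd).1 hprod

end CRsAEq

/-- Only the registers below `N` are in use. -/
def SupportedBelow (N : ℕ) (f : Assignment) : Prop :=
  ∀ r, N ≤ r → f r = ∅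

namespace SetOp

/-- The largest register that occurs in an action. -/
def maxReg : SetOp → ℕ
  | test r q | insertNew r q | copy r q => max r q

/-- The registers that must not contain the input. -/
def freshGuard : SetOp → List ℕ
  | insertNew r _ => [r]
  | test _ _ | copy _ _ => []

/-- The registers that must have the same content as register `q`. -/
def eqGuard : SetOp → ℕ → List ℕ
  | test r r', q => if q = r then [r'] else []
  | insertNew _ _, _ | copy _ _, _ => []

/-- The union of registers and input, encoded as in `CEqTrans.upd`, that replaces the content of
register `q`. -/
def updateRow : SetOp → ℕ → List (Option ℕ)
  | test _ _, q => [some q]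
  | insertNew r r', q => if q = r' then [some r, none] else [some q]
  | copy r r', q => if q = r' then [some r] else [some q]

/-- The effect of an action that is enabled for input `d`. -/
def result : SetOp → Assignment → ℕ → Assignment
  | test _ _, f, _ => f
  | insertNew r r', f, d => Function.update f r' (insert d (f r))
  | copy r r', f, _ => Function.update f r' (f r)

/-- The transition performing an action in an automaton with `N` registers. Its states are
immaterial; they are set by `CEqTrans.between`. -/
def toTrans (k N : ℕ) (op : SetOp) : CEqTrans (k + 1) where
  src := 0
  letter := 0
  gIn := []
  gNin := op.freshGuard
  gEq := (List.range N).map op.eqGuard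
  upd := (List.range N).map op.updateRow
  tgt := 0

variable {k N : ℕ} {op : SetOp} {f f' : Assignment}

theorem wellFormed_toTrans (hop : op.maxReg < N) : (op.toTrans k N).WellFormed N := by
  refine ⟨by simp [toTrans], ?_, by simp [toTrans], by simp [toTrans], ?_, by simp [toTrans], ?_⟩
  · cases op <;> simp_all [toTrans, freshGuard, maxReg]
  · simp only [toTrans, List.forall_mem_map, List.mem_range]
    intro q hq r hr
    cases op <;> grind [eqGuard, maxReg]
  · simp only [toTrans, List.forall_mem_map, List.mem_range]
    intro q hq r hr
    cases op <;> grind [updateRow, maxReg]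

theorem supportedBelow_result (hop : op.maxReg < N) (hf : SupportedBelow N f) (d : ℕ) :
    SupportedBelow N (op.result f d) := by
  intro q hq
  cases op with
  | test => exact hf q hq
  | insertNew | copy =>
    rw [result, Function.update_of_ne, hf q hq]
    exact (((le_max_right _ _).trans_lt hop).trans_le hq).ne'

theorem step_iff : op.Step f f' ↔ ∃ d, (∀ r ∈ op.freshGuard, d ∉ f r) ∧
    (∀ q, ∀ r ∈ op.eqGuard q, f r = f q) ∧ f' = op.result f d := by
  cases op <;> simp [Step, freshGuard, eqGuard, result, eq_comm]

theorem apply_toTrans (hop : op.maxReg < N) (hf : SupportedBelow N f) (d : ℕ) :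
    (op.toTrans k N).apply f d = op.result f d := by
  funext q
  have hrow : (op.toTrans k N).upd.getD q [] = if q < N then op.updateRow q else [] := by
    split_ifs with hq <;> simp [toTrans, List.getD, hq]
  rw [CEqTrans.apply, hrow]
  split_ifs with hq
  · cases op with
    | test => simp [updateRow, result]
    | insertNew | copy =>
      rw [updateRow, result, Function.update_apply]
      split_ifs <;> simp
  · rw [supportedBelow_result hop hf d q (not_lt.1 hq)]
    rfl

theorem storeStep_toTrans_iff (hop : op.maxReg < N) (hf : SupportedBelow N f) :
    (op.toTrans k N).StoreStep f f' ↔ op.Step f f' := by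
  have heq : (∀ q, ∀ r ∈ (op.toTrans k N).gEq.getD q [], f r = f q) ↔
      ∀ q, ∀ r ∈ op.eqGuard q, f r = f q := by
    refine forall_congr' fun q => ?_
    obtain hq | hq := lt_or_ge q N
    · simp [toTrans, List.getD, hq]
    · have hempty : op.eqGuard q = [] := by
        cases op <;> grind [eqGuard, maxReg]
      simp [toTrans, List.getD, hq, hempty]
  simp only [CEqTrans.StoreStep, heq, apply_toTrans hop hf, step_iff]
  simp [toTrans]

theorem Step.supportedBelow (h : op.Step f f') (hop : op.maxReg < N) (hf : SupportedBelow N f) :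
    SupportedBelow N f' := by
  obtain ⟨d, -, -, rfl⟩ := step_iff.1 h
  exact supportedBelow_result hop hf d

end SetOp

namespace Flowchart

variable {Q : Type*} {k N n : ℕ}

/-- The automaton with `N` registers that executes a flowchart, whose nodes are numbered by `e`. -/
def toAut (k N : ℕ) (e : Q ≃ Fin n) (G : Flowchart SetOp Q) : CRsAEq (k + 1) where
  nQ := n
  nR := N
  trans := G.edges.map fun (q, op, q') => (op.toTrans k N).between (e q) (e q')
  I := [(e G.start : ℕ)]
  F := [(e G.final : ℕ)]

variable (e : Q ≃ Fin n) {G : Flowchart SetOp Q}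

theorem wellFormed_toAut (hG : ∀ edge ∈ G.edges, edge.2.1.maxReg < N) :
    (G.toAut k N e).WellFormed := by
  refine ⟨by simp [toAut], by simp [toAut], ?_⟩
  simp only [toAut, List.forall_mem_map]
  exact fun edge hedge =>
    ⟨Fin.isLt _, Fin.isLt _, SetOp.wellFormed_toTrans (k := k) (hG edge hedge)⟩

theorem anyStep_toAut_iff (hG : ∀ edge ∈ G.edges, edge.2.1.maxReg < N) {q : Q} {f : Assignment}
    (hf : SupportedBelow N f) {c : ℕ × Assignment} :
    (G.toAut k N e).AnyStep (e q, f) c ↔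
      ∃ q', G.Step SetOp.Step (q, f) (q', c.2) ∧ e q' = c.1 := by
  rw [CRsAEq.anyStep_iff]
  simp only [toAut, List.mem_map]
  constructor
  · rintro ⟨_, ⟨⟨p, op, p'⟩, hedge, rfl⟩, hsrc, htgt, hstep⟩
    obtain rfl : p = q := e.injective (Fin.ext hsrc)
    exact ⟨p', ⟨op, hedge, (SetOp.storeStep_toTrans_iff (k := k) (hG _ hedge) hf).1 hstep⟩, htgt⟩
  · rintro ⟨q', ⟨op, hedge, hstep⟩, htgt⟩
    exact ⟨_, ⟨_, hedge, rfl⟩, rfl, htgt,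
      (SetOp.storeStep_toTrans_iff (k := k) (hG _ hedge) hf).2 hstep⟩

theorem acceptsFrom_toAut_iff (hG : ∀ edge ∈ G.edges, edge.2.1.maxReg < N) {f : Assignment}
    (hf : SupportedBelow N f) :
    (G.toAut k N e).AcceptsFrom f ↔ ∃ f', G.Rel SetOp.Step f f' := by
  let R (c : Q × Assignment) (c' : ℕ × Assignment) : Prop :=
    c' = (↑(e c.1), c.2) ∧ SupportedBelow N c.2
  have preserved {c c'} (h : G.Step SetOp.Step c c') (hc : SupportedBelow N c.2) :
      SupportedBelow N c'.2 := by
    obtain ⟨op, hedge, hstep⟩ := h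
    exact hstep.supportedBelow (hG _ hedge) hc
  have fwd : IsSimulation R (G.Step SetOp.Step) (G.toAut k N e).AnyStep := by
    rintro c _ c' ⟨rfl, hc⟩ hstep
    exact ⟨_, ⟨rfl, preserved hstep hc⟩, (anyStep_toAut_iff e hG hc).2 ⟨_, hstep, rfl⟩⟩
  have bwd : IsSimulation (flip R) (G.toAut k N e).AnyStep (G.Step SetOp.Step) := by
    rintro _ c c' ⟨rfl, hc⟩ hstep
    obtain ⟨q', hstep, hq'⟩ := (anyStep_toAut_iff e hG hc).1 hstep
    exact ⟨_, ⟨Prod.ext hq'.symm rfl, preserved hstep hc⟩, hstep⟩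
  constructor
  · rintro ⟨q, hq, c, hrun, hc⟩
    obtain rfl : q = e G.start := List.mem_singleton.1 hq
    obtain ⟨⟨p, f'⟩, ⟨rfl, -⟩, hrel⟩ := bwd.reflTransGen (y := (G.start, f)) ⟨rfl, hf⟩ hrun
    obtain rfl : p = G.final := e.injective (Fin.ext (List.mem_singleton.1 hc))
    exact ⟨f', hrel⟩
  · rintro ⟨f', hrun⟩
    obtain ⟨_, ⟨rfl, -⟩, hrun⟩ := fwd.reflTransGen (x := (G.start, f)) ⟨rfl, hf⟩ hrun
    exact ⟨_, List.mem_singleton_self _, _, hrun, List.mem_singleton_self _⟩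

end Flowchart

/-! ### Reduction from the halting problem -/

namespace CRsAEq

variable {k : ℕ} {A : CRsAEq (k + 1)}

/-- Adds `n` initial transitions to `A`, which insert new data into register `3` and thus add `n`
to counter `0`. -/
def withInput (A : CRsAEq (k + 1)) (n : ℕ) : CRsAEq (k + 1) :=
  (prepend ((SetOp.insertNew 3 3).toTrans k A.nR))^[n] A

theorem primrec_withInput (A : CRsAEq (k + 1)) : Primrec A.withInput :=
  Primrec.nat_iterate .id (.const A) ((primrec_prepend _).comp .snd)

theorem WellFormed.withInput (hA : A.WellFormed) (hR : 3 < A.nR) (n : ℕ) :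
    (A.withInput n).WellFormed :=
  hA.iterate_prepend (SetOp.wellFormed_toTrans (op := .insertNew 3 3) hR) n

theorem acceptsFrom_withInput_iff (hA : A.WellFormed) (hR : 3 < A.nR) {p : (ℕ → ℕ) → Prop}
    (hp : ∀ f s, SupportedBelow A.nR f → Represents f s → (A.AcceptsFrom f ↔ p s)) (n : ℕ)
    {f : Assignment} {s : ℕ → ℕ} (hf : SupportedBelow A.nR f) (hs : Represents f s) :
    (A.withInput n).AcceptsFrom f ↔ p (Function.update s 0 (s 0 + n)) := by
  have hop : (SetOp.insertNew 3 3).maxReg < A.nR := hR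
  induction n generalizing f s with
  | zero => simpa [withInput] using hp f s hf hs
  | succ n ih =>
    have after_step {f'} (h : (SetOp.insertNew 3 3).Step f f') :
        (A.withInput n).AcceptsFrom f' ↔ p (Function.update s 0 (s 0 + (n + 1))) := by
      simpa [add_assoc, add_comm 1 n] using ih (h.supportedBelow hop hf) (hs.insertNew (r := 0) h)
    rw [withInput, Function.iterate_succ_apply', ← withInput,
      acceptsFrom_prepend (hA.withInput hR n)]
    simp only [SetOp.storeStep_toTrans_iff hop hf]
    obtain ⟨f', h⟩ := SetOp.exists_step_insertNew 3 3 f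
    exact ⟨fun ⟨_, h, hacc⟩ => (after_step h).1 hacc, fun hacc => ⟨f', h, (after_step h).2 hacc⟩⟩

end CRsAEq

theorem Flowchart.exists_maxReg_lt {Q : Type*} (G : Flowchart SetOp Q) :
    ∃ N > 3, ∀ edge ∈ G.edges, edge.2.1.maxReg < N := by
  obtain ⟨N, hN⟩ := ((List.finite_toSet G.edges).image fun edge => edge.2.1.maxReg).bddAbove
  exact ⟨N + 4, by omega, fun edge hedge =>
    (hN (Set.mem_image_of_mem _ hedge)).trans_lt (by omega)⟩

theorem Realizable.exists_primrec_automata (k : ℕ) {ρ : (ℕ → ℕ) → (ℕ → ℕ) → Prop}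
    (hρ : Realizable ρ) : ∃ A : ℕ → CRsAEq (k + 1), Primrec A ∧
      ∀ n, (A n).WellFormed ∧ ((A n).Lang.Nonempty ↔ ∃ s, ρ (Function.update 0 0 n) s) := by
  obtain ⟨_, ⟨Q, _, G, rfl⟩, fwd, bwd⟩ := hρ
  obtain ⟨N, hN, hG⟩ := G.exists_maxReg_lt
  let e := Fintype.equivFin Q
  have hWF : (G.toAut k N e).WellFormed := Flowchart.wellFormed_toAut e hG
  have hAccepts : ∀ f s, SupportedBelow N f → Represents f s →
      ((G.toAut k N e).AcceptsFrom f ↔ ∃ s', ρ s s') := by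
    intro f s hf hs
    rw [Flowchart.acceptsFrom_toAut_iff e hG hf]
    exact ⟨fun ⟨_, h⟩ => (fwd hs h).imp fun _ => And.right,
      fun ⟨_, h⟩ => (bwd hs h).imp fun _ => And.right⟩
  refine ⟨(G.toAut k N e).withInput, CRsAEq.primrec_withInput _, fun n => ⟨hWF.withInput hN n, ?_⟩⟩
  rw [CRsAEq.lang_nonempty_iff, CRsAEq.acceptsFrom_withInput_iff hWF hN hAccepts n (s := 0)
    (fun _ _ => rfl) ⟨rfl, fun _ => rfl⟩]
  simp

/-- The emptiness problem for register set automata with register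
equality test is undecidable: no computable function decides, given (an encoding of)
such an automaton, whether its language is empty. -/
theorem rsaeq_emptiness_undecidable (k : ℕ) :
    ¬ ∃ f : CRsAEq (k + 1) → Bool, Computable f ∧
        ∀ A : CRsAEq (k + 1), A.WellFormed → (f A = true ↔ CRsAEq.Lang A = ∅) := by
  rintro ⟨f, hf, hdecides⟩
  obtain ⟨ρ, hρ, hhalts⟩ := Realizable.exists_halting 0
  obtain ⟨A, hA, hlang⟩ := hρ.exists_primrec_automata k
  have reduction (e : Nat.Partrec.Code) :
      (e.eval 0).Dom ↔ (!f (A (Encodable.encode e))) = true := by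
    obtain ⟨hWF, hnonempty⟩ := hlang (Encodable.encode e)
    rw [← hhalts, ← hnonempty, Set.nonempty_iff_ne_empty, Ne, ← hdecides _ hWF,
      Bool.not_eq_true, Bool.not_eq_true']
  refine ComputablePred.halting_problem 0 (ComputablePred.computable_iff.2
    ⟨fun e => !f (A (Encodable.encode e)), ?_, funext fun e => propext (reduction e)⟩)
  exact Primrec.not.to_comp.comp (hf.comp (hA.to_comp.comp Computable.encode))
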